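/- Let d ≥ 2 and let p be a symmetric probability mass function on ℤ with 0 < Σ_{j∈ℤ} j² p(j) < ∞. Let H be the almost-sure limit of the spherical averages H_r of the free height field with increment law p on the rooted Cayley tree of order d. Then the law of H is absolutely continuous with respect to Lebesgue measure on ℝ and admits a bounded, infinitely differentiable (C^∞) density f_H, given by Fourier inversion: f_H(x) = (2π)^{−1} ∫_ℝ e^{−itx} E[exp(itH)] dt. -/

import Mathlib

open MeasureTheory ProbabilityTheory Filter Finset Topology

noncomputable section

/-- A non-root vertex of the rooted Cayley tree of order `d`: the first step from the
root is one of `d+1` children, every further step one of `d` children. -/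
abbrev Vertex (d : ℕ) : Type := Fin (d + 1) × List (Fin d)

/-- depth of a non-root vertex -/
def vdepth {d : ℕ} (v : Vertex d) : ℕ := v.2.length + 1

/-- the sphere `W_r` of radius `r ≥ 1`: all vertices of depth `r` -/
def sphereW (d r : ℕ) : Finset (Vertex d) :=
  (Finset.univ : Finset (Fin (d + 1) × (Fin (r - 1) → Fin d))).image
    (fun x => (x.1, List.ofFn x.2))

/-- height at `v`: sum of the increments along the path from the root to `v`
(the prefixes of length `0,…,|v.2|` of the step list of `v` enumerate that path). -/
def heightAt {d : ℕ} {Ω : Type*} (Y : Vertex d → Ω → ℝ) (v : Vertex d) (ω : Ω) : ℝ :=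
  ∑ k ∈ Finset.range (v.2.length + 1), Y (v.1, v.2.take k) ω

/-- spherical average `H_r` of the heights at depth `r` -/
def sphAvg (d : ℕ) {Ω : Type*} (Y : Vertex d → Ω → ℝ) (r : ℕ) (ω : Ω) : ℝ :=
  (((d + 1) * d ^ (r - 1) : ℕ) : ℝ)⁻¹ * ∑ v ∈ sphereW d r, heightAt Y v ω

/-!
The height `S_v` is the sum of the increments along the path to `v`, so `H_r` is a weighted sum of
independent increments in which each vertex of `W_k`, `1 ≤ k ≤ r`, has weight `1 / |W_k|`.
Keeping only the factors of one sphere in the characteristic function of the limit gives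
`|φ_H(t)| ≤ |φ(t / |W_k|)| ^ |W_k|` for every `k`, with `φ` the characteristic function of the
increments. As the law of the increments is not a point mass, `|φ| < 1` on some punctured
neighbourhood of `0`, hence `|φ| ≤ exp (-δ)` on a compact annulus in it. Because `|W_k|` grows
geometrically, every large `t` has a `k` with `t / |W_k|` in this annulus, and then `|W_k|` is
comparable to `|t|`. So `φ_H` decays exponentially, and Fourier inversion yields the density.
-/

section FourierInversion

open scoped ContDiff FourierTransform RealInnerProductSpace SchwartzMap

lemma locallyIntegrable_rnDeriv_smul {α F : Type*} [TopologicalSpace α] [MeasurableSpace α]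
    [OpensMeasurableSpace α] [NormedAddCommGroup F] [NormedSpace ℝ F] {μ ν : Measure α}
    [SigmaFinite μ] [SigmaFinite ν] (hμν : μ ≪ ν) {f : α → F} (hf : LocallyIntegrable f μ) :
    LocallyIntegrable (fun x ↦ (μ.rnDeriv ν x).toReal • f x) ν := by
  intro x
  obtain ⟨s, hs, hfs⟩ := hf x
  obtain ⟨u, hus, hu, hxu⟩ := mem_nhds_iff.1 hs
  refine ⟨u, hu.mem_nhds hxu, (integrable_indicator_iff hu.measurableSet).1 ?_⟩
  simpa only [Set.indicator_smul] using (integrable_rnDeriv_smul_iff hμν).2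
    ((integrable_indicator_iff hu.measurableSet).2 (hfs.mono_set hus))

variable {E : Type*} [NormedAddCommGroup E] [MeasurableSpace E]

theorem eq_withDensity_of_integral_contDiff_eq_integral_mul [NormedSpace ℝ E]
    [FiniteDimensional ℝ E] [BorelSpace E] {μ ν : Measure E} [IsLocallyFiniteMeasure μ]
    [IsLocallyFiniteMeasure ν] {f : E → ℝ} (hf : LocallyIntegrable f ν)
    (h : ∀ g : E → ℝ, ContDiff ℝ ∞ g → HasCompactSupport g →
      ∫ x, g x ∂μ = ∫ x, g x * f x ∂ν) :
    μ = ν.withDensity fun x ↦ ENNReal.ofReal (f x) := by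
  have hμ : μ ≪ μ + ν := Measure.AbsolutelyContinuous.rfl.add_right ν
  have hν : ν ≪ μ + ν := add_comm ν μ ▸ Measure.AbsolutelyContinuous.rfl.add_right μ
  -- Since `f` may change sign, `μ` and `f ν` are compared through densities w.r.t. `μ + ν`.
  have hdensity : ∀ᵐ x ∂(μ + ν),
      (μ.rnDeriv (μ + ν) x).toReal • (1 : ℝ) = (ν.rnDeriv (μ + ν) x).toReal • f x := by
    refine ae_eq_of_integral_contDiff_smul_eq
      (locallyIntegrable_rnDeriv_smul hμ (locallyIntegrable_const 1))
      (locallyIntegrable_rnDeriv_smul hν hf) fun g hg hgc ↦ ?_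
    simp only [smul_comm (g _), integral_rnDeriv_smul hμ, integral_rnDeriv_smul hν]
    simpa using h g hg hgc
  have hrn : μ.rnDeriv (μ + ν) =ᵐ[μ + ν]
      ν.rnDeriv (μ + ν) * fun x ↦ ENNReal.ofReal (f x) := by
    filter_upwards [hdensity, μ.rnDeriv_lt_top (μ + ν), ν.rnDeriv_lt_top (μ + ν)] with x hx hμx hνx
    rw [smul_eq_mul, smul_eq_mul, mul_one] at hx
    rw [Pi.mul_apply, ← ENNReal.ofReal_toReal hμx.ne, hx, ENNReal.ofReal_mul ENNReal.toReal_nonneg,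
      ENNReal.ofReal_toReal hνx.ne]
  ext s hs
  calc μ s = ∫⁻ x in s, μ.rnDeriv (μ + ν) x ∂(μ + ν) := (Measure.setLIntegral_rnDeriv hμ s).symm
    _ = ∫⁻ x in s, (ν.rnDeriv (μ + ν) * fun x ↦ ENNReal.ofReal (f x)) x ∂(μ + ν) :=
      lintegral_congr_ae (ae_restrict_of_ae hrn)
    _ = ∫⁻ x in s, ENNReal.ofReal (f x) ∂ν := by
      rw [← setLIntegral_withDensity_eq_setLIntegral_mul_non_measurable _
        (ν.measurable_rnDeriv _) _ hs (ae_restrict_of_ae (ν.rnDeriv_lt_top _)),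
        Measure.withDensity_rnDeriv_eq ν _ hν]
    _ = ν.withDensity (fun x ↦ ENNReal.ofReal (f x)) s := (withDensity_apply _ hs).symm

variable [InnerProductSpace ℝ E] {μ : Measure E}

lemma charFun_two_pi_smul (μ : Measure E) (s : E) :
    charFun μ ((2 * Real.pi) • s) =
      VectorFourier.fourierIntegral Real.fourierChar μ (-innerₗ E) 1 s := by
  simp only [charFun_apply, VectorFourier.fourierIntegral, Circle.smul_def, Real.fourierChar_apply]
  congr with x
  simp [inner_smul_right]

variable [BorelSpace E] [FiniteDimensional ℝ E]

/-- The candidate density of `μ` given by Fourier inversion of its characteristic function. It is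
made real by taking the real part, which loses nothing by `ofReal_fourierDensity`. -/
def fourierDensity (μ : Measure E) (x : E) : ℝ :=
  (𝓕 (fun s ↦ charFun μ ((2 * Real.pi) • s)) x).re

lemma ofReal_fourierDensity (μ : Measure E) (x : E) :
    (fourierDensity μ x : ℂ) = 𝓕 (fun s ↦ charFun μ ((2 * Real.pi) • s)) x := by
  refine Complex.conj_eq_iff_re.1 ?_
  rw [Real.fourier_eq', ← integral_conj, ← integral_neg_eq_self]
  congr with s
  simp [← Complex.exp_conj, charFun_neg, Complex.conj_ofNat]

lemma ofReal_fourierDensity_eq_integral (μ : Measure E) (x : E) :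
    (fourierDensity μ x : ℂ) = (((2 * Real.pi) ^ Module.finrank ℝ E)⁻¹ : ℝ) *
      ∫ t, Complex.exp (-(⟪t, x⟫ * Complex.I)) * charFun μ t := by
  have h := Measure.integral_comp_smul volume
    (fun t ↦ Complex.exp (-(⟪t, x⟫ * Complex.I)) * charFun μ t) (2 * Real.pi)
  rw [abs_of_pos (by positivity), Complex.real_smul] at h
  rw [ofReal_fourierDensity, Real.fourier_eq', ← h]
  simp [real_inner_smul_left]

lemma integrable_charFun_two_pi_smul (hμ : Integrable (charFun μ)) :
    Integrable fun s ↦ charFun μ ((2 * Real.pi) • s) :=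
  hμ.comp_smul Real.two_pi_pos.ne'

lemma abs_fourierDensity_le (μ : Measure E) (x : E) :
    |fourierDensity μ x| ≤ ∫ s, ‖charFun μ ((2 * Real.pi) • s)‖ :=
  (Complex.abs_re_le_norm _).trans
    (VectorFourier.norm_fourierIntegral_le_integral_norm _ _ _ _ _)

lemma contDiff_fourierDensity {N : ℕ∞}
    (h : ∀ n : ℕ, n ≤ N → Integrable fun t ↦ ‖t‖ ^ n * ‖charFun μ t‖) :
    ContDiff ℝ N (fourierDensity μ) := by
  refine Complex.reCLM.contDiff.comp (Real.contDiff_fourier fun n hn ↦ ?_)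
  refine (((h n hn).comp_smul Real.two_pi_pos.ne').const_mul ((2 * Real.pi) ^ n)⁻¹).congr
    (ae_of_all _ fun s ↦ ?_)
  have : (2 * Real.pi) ^ n ≠ 0 := by positivity
  simp only [norm_smul, Real.norm_of_nonneg Real.two_pi_pos.le, mul_pow]
  field_simp

lemma continuous_fourierDensity (hμ : Integrable (charFun μ)) : Continuous (fourierDensity μ) := by
  refine contDiff_zero.1 (contDiff_fourierDensity fun n hn ↦ ?_)
  obtain rfl : n = 0 := by simpa using hn
  simpa using hμ.norm

lemma integral_fourierInv_eq_integral_charFun_mul [IsFiniteMeasure μ] {η : E → ℂ}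
    (hη : Integrable η) : ∫ x, 𝓕⁻ η x ∂μ = ∫ s, charFun μ ((2 * Real.pi) • s) * η s := by
  have h := VectorFourier.integral_fourierIntegral_smul_eq_flip (L := -innerₗ E) (μ := μ)
    (ν := volume) (f := 1) Real.continuous_fourierChar (by simpa using! continuous_inner.neg)
    (integrable_const (1 : ℂ)) hη
  simp only [← charFun_two_pi_smul, Pi.one_apply, smul_eq_mul, one_mul] at h
  rw [h]
  congr with x
  simp [Real.fourierInv_eq, VectorFourier.fourierIntegral, real_inner_comm]

lemma integral_schwartzMap_eq_integral_mul_fourierDensity [IsFiniteMeasure μ]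
    (hμ : Integrable (charFun μ)) (ψ : 𝓢(E, ℂ)) :
    ∫ x, ψ x ∂μ = ∫ x, ψ x * fourierDensity μ x := by
  calc ∫ x, ψ x ∂μ = ∫ x, 𝓕⁻ (𝓕 ψ : 𝓢(E, ℂ)) x ∂μ := by
        rw [FourierTransform.fourierInv_fourier_eq]
    _ = ∫ s, charFun μ ((2 * Real.pi) • s) * (𝓕 ψ : 𝓢(E, ℂ)) s := by
        simp only [SchwartzMap.fourierInv_coe]
        exact integral_fourierInv_eq_integral_charFun_mul (𝓕 ψ : 𝓢(E, ℂ)).integrable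
    _ = ∫ s, 𝓕 (ψ : E → ℂ) s * charFun μ ((2 * Real.pi) • s) := by
        simp only [SchwartzMap.fourier_coe, mul_comm]
    _ = ∫ x, ψ x * 𝓕 (fun s ↦ charFun μ ((2 * Real.pi) • s)) x := by
        simpa using! VectorFourier.integral_fourierIntegral_smul_eq_flip (L := innerₗ E)
          (ν := volume) Real.continuous_fourierChar continuous_inner (ψ.integrable (μ := volume))
          (integrable_charFun_two_pi_smul hμ)
    _ = ∫ x, ψ x * fourierDensity μ x := by simp only [ofReal_fourierDensity]

theorem eq_withDensity_fourierDensity [IsFiniteMeasure μ] (hμ : Integrable (charFun μ)) :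
    μ = volume.withDensity fun x ↦ ENNReal.ofReal (fourierDensity μ x) := by
  refine eq_withDensity_of_integral_contDiff_eq_integral_mul
    (continuous_fourierDensity hμ).locallyIntegrable fun g hg hgc ↦ ?_
  have hgc' : HasCompactSupport (Complex.ofRealCLM ∘ g) := hgc.comp_left rfl
  have h := integral_schwartzMap_eq_integral_mul_fourierDensity hμ
    (hgc'.toSchwartzMap (Complex.ofRealCLM.contDiff.comp hg))
  apply Complex.ofReal_injective
  simpa [← integral_complex_ofReal] using h

end FourierInversion

lemma integrable_pow_mul_norm_of_exp_decay {E F : Type*} [NormedAddCommGroup E]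
    [MeasurableSpace E] [NormedAddCommGroup F] [BorelSpace E] [SecondCountableTopology E]
    {μ : Measure E} [μ.HasTemperateGrowth] {f : E → F} (hf : AEStronglyMeasurable f μ) {C c : ℝ}
    (hc : 0 < c) (hfc : ∀ t, ‖f t‖ ≤ C * Real.exp (-(c * ‖t‖))) (n : ℕ) :
    Integrable (fun t ↦ ‖t‖ ^ n * ‖f t‖) μ := by
  have hpow : ∀ (m : ℕ) (t : E), ‖t‖ ^ m * ‖f t‖ ≤ m.factorial / c ^ m * C := fun m t ↦ by
    have hexp := Real.pow_div_factorial_le_exp (c * ‖t‖) (by positivity) m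
    calc ‖t‖ ^ m * ‖f t‖
        = m.factorial / c ^ m * ((c * ‖t‖) ^ m / m.factorial * ‖f t‖) := by
          rw [mul_pow]; field_simp
      _ ≤ m.factorial / c ^ m *
          (Real.exp (c * ‖t‖) * (C * Real.exp (-(c * ‖t‖)))) := by gcongr; exact hfc t
      _ = m.factorial / c ^ m * C := by
          rw [mul_left_comm (Real.exp _), ← Real.exp_add, add_neg_cancel, Real.exp_zero, mul_one]
  exact integrable_of_le_of_pow_mul_le (fun t ↦ by simpa using hpow 0 t) (fun t ↦ hpow _ t) hf

lemma nontrivial_support_of_forall_ne_dirac {α : Type*} [TopologicalSpace α]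
    [HereditarilyLindelofSpace α] [MeasurableSpace α] {μ : Measure α} [IsProbabilityMeasure μ]
    (hμ : ∀ c, μ ≠ Measure.dirac c) : μ.support.Nontrivial := by
  obtain ⟨c, hc⟩ := Measure.nonempty_support (IsProbabilityMeasure.ne_zero μ)
  refine (Set.nontrivial_iff_ne_singleton hc).2 fun hsupport ↦ hμ c ?_
  have hconst : (fun x ↦ x) =ᵐ[μ] fun _ ↦ c := by
    filter_upwards [Measure.support_mem_ae (μ := μ)] with x hx
    simpa [hsupport] using hx
  simpa using Measure.map_congr hconst

open scoped RealInnerProductSpace in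
lemma norm_charFun_lt_one_of_mem_support {E : Type*} [NormedAddCommGroup E] [InnerProductSpace ℝ E]
    [MeasurableSpace E] {μ : Measure E} [IsProbabilityMeasure μ] {x y s : E}
    (hx : x ∈ μ.support) (hy : y ∈ μ.support)
    (hxy : Complex.exp (⟪x, s⟫ * Complex.I) ≠ Complex.exp (⟪y, s⟫ * Complex.I)) :
    ‖charFun μ s‖ < 1 := by
  set e : E → ℂ := fun z ↦ Complex.exp (⟪z, s⟫ * Complex.I)
  have hnorm : ∀ᵐ z ∂μ, ‖e z‖ ≤ 1 := ae_of_all _ fun z ↦ (Complex.norm_exp_ofReal_mul_I _).le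
  rcases ae_eq_const_or_norm_integral_lt_of_norm_le_const hnorm with hconst | hlt
  · have hclosed : IsClosed {z | e z = ⨍ x, e x ∂μ} :=
      isClosed_eq (by fun_prop) continuous_const
    have hsupport := Measure.support_subset_of_isClosed hclosed hconst
    exact absurd ((hsupport hx).trans (hsupport hy).symm) hxy
  · simpa [charFun_apply] using hlt

lemma exists_norm_charFun_lt_one {ν : Measure ℝ} [IsProbabilityMeasure ν]
    (hν : ∀ c, ν ≠ Measure.dirac c) :
    ∃ a > 0, ∀ s, s ≠ 0 → |s| ≤ a → ‖charFun ν s‖ < 1 := by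
  obtain ⟨x, hx, y, hy, hxy⟩ := nontrivial_support_of_forall_ne_dirac hν
  have hdist : 0 < |x - y| := abs_pos.2 (sub_ne_zero.2 hxy)
  refine ⟨|x - y|⁻¹, inv_pos.2 hdist, fun s hs hsa ↦
    norm_charFun_lt_one_of_mem_support hx hy fun hexp ↦ ?_⟩
  have hcos : Real.cos (s * (x - y)) = 1 := by
    have hone : Complex.exp ((s * (x - y) : ℝ) * Complex.I) = 1 := by
      rw [← div_eq_one_iff_eq (Complex.exp_ne_zero _), ← Complex.exp_sub] at hexp
      simpa [mul_sub, sub_mul] using hexp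
    rw [← Complex.exp_ofReal_mul_I_re, hone, Complex.one_re]
  have hle : |s * (x - y)| ≤ 1 := by
    rwa [abs_mul, ← le_mul_inv_iff₀ hdist, one_mul]
  have hzero : s * (x - y) = 0 := (Real.cos_eq_one_iff_of_lt_of_lt
    (by linarith [neg_le_of_abs_le hle, Real.pi_gt_three])
    (by linarith [le_of_abs_le hle, Real.pi_gt_three])).1 hcos
  exact mul_ne_zero hs (sub_ne_zero.2 hxy) hzero

lemma exists_norm_le_exp_neg_of_isCompact {α F : Type*} [TopologicalSpace α] [NormedAddCommGroup F]
    {K : Set α} (hK : IsCompact K) {f : α → F} (hf : ContinuousOn f K)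
    (hf1 : ∀ x ∈ K, ‖f x‖ < 1) : ∃ δ > 0, ∀ x ∈ K, ‖f x‖ ≤ Real.exp (-δ) := by
  rcases K.eq_empty_or_nonempty with rfl | hne
  · exact ⟨1, one_pos, by simp⟩
  · obtain ⟨x₀, hx₀, hmax⟩ := hK.exists_isMaxOn hne hf.norm
    refine ⟨1 - ‖f x₀‖, sub_pos.2 (hf1 x₀ hx₀), fun x hx ↦ (hmax hx).trans ?_⟩
    linarith [Real.add_one_le_exp (-(1 - ‖f x₀‖))]

lemma exists_inv_mul_mem_annulus {a t : ℝ} {m d : ℕ} (ha : 0 < a) (hm : 0 < m) (hd : 1 < d)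
    (ht : a * m ≤ |t|) : ∃ k : ℕ,
      ((m * d ^ k : ℕ) : ℝ)⁻¹ * t ∈ Metric.closedBall (0 : ℝ) a \ Metric.ball 0 (a / d) := by
  obtain ⟨k, hk, hk'⟩ := exists_nat_pow_near ((one_le_div (by positivity)).2 ht)
    (Nat.one_lt_cast.2 hd)
  rw [le_div_iff₀ (by positivity)] at hk
  rw [div_lt_iff₀ (by positivity)] at hk'
  refine ⟨k + 1, ?_⟩
  have hn : (0 : ℝ) < (m * d ^ (k + 1) : ℕ) := mod_cast by positivity
  simp only [Set.mem_sdiff, mem_closedBall_zero_iff, mem_ball_zero_iff, not_lt, norm_mul, norm_inv,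
    Real.norm_eq_abs, Nat.abs_cast]
  rw [inv_mul_le_iff₀ hn, le_inv_mul_iff₀ hn]
  push_cast
  constructor
  · linarith [pow_succ (d : ℝ) k]
  · calc (m * d ^ (k + 1) : ℝ) * (a / d) = d ^ k * (a * m) := by rw [pow_succ]; field_simp
      _ ≤ |t| := hk

lemma exists_exp_decay_of_norm_le_norm_pow {F G : Type*} [NormedAddCommGroup F]
    [NormedAddCommGroup G] {φ : ℝ → F} {ψ : ℝ → G} {a : ℝ} {m d : ℕ} (ha : 0 < a) (hm : 0 < m)
    (hd : 1 < d) (hψ : Continuous ψ) (hψ1 : ∀ s, s ≠ 0 → |s| ≤ a → ‖ψ s‖ < 1)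
    (hφ1 : ∀ t, ‖φ t‖ ≤ 1)
    (hφψ : ∀ k t, ‖φ t‖ ≤ ‖ψ (((m * d ^ k : ℕ) : ℝ)⁻¹ * t)‖ ^ (m * d ^ k)) :
    ∃ C c : ℝ, 0 < c ∧ ∀ t, ‖φ t‖ ≤ C * Real.exp (-(c * ‖t‖)) := by
  obtain ⟨δ, hδ, hψδ⟩ := exists_norm_le_exp_neg_of_isCompact
    ((isCompact_closedBall (0 : ℝ) a).diff (Metric.isOpen_ball (x := 0) (ε := a / d)))
    hψ.continuousOn fun s hs ↦ by
      simp only [Set.mem_sdiff, mem_closedBall_zero_iff, mem_ball_zero_iff, not_lt] at hs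
      exact hψ1 s (norm_pos_iff.1 ((by positivity : 0 < a / d).trans_le hs.2)) hs.1
  refine ⟨Real.exp (δ * m), δ / a, by positivity, fun t ↦ ?_⟩
  rw [← Real.exp_add, Real.norm_eq_abs]
  rcases lt_or_ge |t| (a * m) with ht | ht
  · refine (hφ1 t).trans (Real.one_le_exp ?_)
    have hct : δ / a * |t| ≤ δ * m := calc
      δ / a * |t| ≤ δ / a * (a * m) := by gcongr
      _ = δ * m := by field_simp
    linarith
  · obtain ⟨k, hk⟩ := exists_inv_mul_mem_annulus ha hm hd ht
    set n : ℕ := m * d ^ k with hn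
    have hn0 : (0 : ℝ) < n := by rw [hn]; exact mod_cast by positivity
    have htn : |t| ≤ n * a := by
      simpa [abs_mul, inv_mul_le_iff₀ hn0] using Metric.mem_closedBall.1 hk.1
    have hct : δ / a * |t| ≤ n * δ := calc
      δ / a * |t| ≤ δ / a * (n * a) := by gcongr
      _ = n * δ := by field_simp
    have hδm : 0 ≤ δ * m := by positivity
    calc ‖φ t‖ ≤ ‖ψ ((n : ℝ)⁻¹ * t)‖ ^ n := hφψ k t
      _ ≤ Real.exp (-δ) ^ n := by gcongr; exact hψδ _ hk
      _ = Real.exp (-(n * δ)) := by rw [← Real.exp_nat_mul, mul_neg]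
      _ ≤ Real.exp (δ * m + -(δ / a * |t|)) := by gcongr; linarith

section CayleyTree

variable {d : ℕ}

lemma vdepth_of_mem_sphereW {k : ℕ} {v : Vertex d} (hv : v ∈ sphereW d (k + 1)) :
    vdepth v = k + 1 := by
  obtain ⟨x, -, rfl⟩ := Finset.mem_image.1 hv
  simp [vdepth]

lemma sum_sphereW_succ {M : Type*} [AddCommMonoid M] (k : ℕ) (g : Vertex d → M) :
    ∑ v ∈ sphereW d (k + 1), g v = ∑ i, ∑ y : Fin k → Fin d, g (i, List.ofFn y) := by
  have hinj : Function.Injective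
      (Prod.map id List.ofFn : Fin (d + 1) × (Fin k → Fin d) → Vertex d) :=
    Function.injective_id.prodMap List.ofFn_injective
  exact (sum_image hinj.injOn).trans (Fintype.sum_prod_type _)

lemma card_sphereW_succ (d k : ℕ) : #(sphereW d (k + 1)) = (d + 1) * d ^ k := by
  rw [card_eq_sum_ones, sum_sphereW_succ]
  simp

lemma sum_take_sphereW {M : Type*} [AddCommMonoid M] (k l : ℕ) (g : Vertex d → M) :
    ∑ v ∈ sphereW d (k + l + 1), g (v.1, v.2.take k) =
      d ^ l • ∑ v ∈ sphereW d (k + 1), g v := by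
  simp only [sum_sphereW_succ, smul_sum, ← (Fin.appendEquiv k l).sum_comp, Fintype.sum_prod_type]
  simp [Fin.appendEquiv, List.ofFn_fin_append, List.take_left']

/-- The non-root vertices of depth at most `m`. -/
def puncturedBall (d m : ℕ) : Finset (Vertex d) :=
  (range m).biUnion fun k ↦ sphereW d (k + 1)

lemma sphereW_subset_puncturedBall {k m : ℕ} (hkm : k < m) :
    sphereW d (k + 1) ⊆ puncturedBall d m :=
  subset_biUnion_of_mem (fun k ↦ sphereW d (k + 1)) (mem_range.2 hkm)

lemma sum_puncturedBall {M : Type*} [AddCommMonoid M] (m : ℕ) (g : Vertex d → M) :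
    ∑ v ∈ puncturedBall d m, g v = ∑ k ∈ range m, ∑ v ∈ sphereW d (k + 1), g v :=
  sum_biUnion fun _ _ _ _ hij ↦ disjoint_left.2 fun _ hvi hvj ↦ hij <|
    Nat.succ_injective ((vdepth_of_mem_sphereW hvi).symm.trans (vdepth_of_mem_sphereW hvj))

theorem sphAvg_succ_eq_sum_puncturedBall {Ω : Type*} (hd : d ≠ 0) (Y : Vertex d → Ω → ℝ) (m : ℕ)
    (ω : Ω) : sphAvg d Y (m + 1) ω =
      ∑ v ∈ puncturedBall d (m + 1), (#(sphereW d (vdepth v)) : ℝ)⁻¹ * Y v ω := by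
  have hpath : ∀ v ∈ sphereW d (m + 1),
      heightAt Y v ω = ∑ k ∈ range (m + 1), Y (v.1, v.2.take k) ω := fun v hv ↦ by
    rw [heightAt, ← vdepth_of_mem_sphereW hv, vdepth]
  rw [sphAvg, add_tsub_cancel_right, sum_congr rfl hpath, sum_comm, mul_sum, sum_puncturedBall]
  refine sum_congr rfl fun k hk ↦ ?_
  obtain ⟨l, rfl⟩ := Nat.exists_eq_add_of_le (Nat.lt_succ_iff.1 (mem_range.1 hk))
  have hweight : ∀ v ∈ sphereW d (k + 1), (#(sphereW d (vdepth v)) : ℝ)⁻¹ * Y v ω =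
      (#(sphereW d (k + 1)) : ℝ)⁻¹ * Y v ω := fun v hv ↦ by rw [vdepth_of_mem_sphereW hv]
  rw [sum_take_sphereW k l fun v ↦ Y v ω, sum_congr rfl hweight, ← mul_sum, card_sphereW_succ,
    nsmul_eq_mul, ← mul_assoc]
  congr 1
  push_cast
  rw [pow_add]
  field_simp

end CayleyTree

lemma aemeasurable_sphAvg {Ω : Type*} [MeasurableSpace Ω] {P : Measure Ω} {d : ℕ}
    {X : Vertex d → Ω → ℝ} (hX : ∀ v, AEMeasurable (X v) P) (r : ℕ) :
    AEMeasurable (sphAvg d X r) P := by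
  unfold sphAvg heightAt
  fun_prop

section SphericalAverages

variable {Ω : Type*} [MeasurableSpace Ω] {P : Measure Ω} [IsProbabilityMeasure P]

theorem norm_charFun_map_sum_le_prod {ι E : Type*} [NormedAddCommGroup E] [InnerProductSpace ℝ E]
    [MeasurableSpace E] [BorelSpace E] [SecondCountableTopology E] {X : ι → Ω → E}
    (hX : ∀ i, AEMeasurable (X i) P) (hindep : iIndepFun X P) {s t : Finset ι} (hst : s ⊆ t)
    (ξ : E) :
    ‖charFun (P.map fun ω ↦ ∑ i ∈ t, X i ω) ξ‖ ≤ ∏ i ∈ s, ‖charFun (P.map (X i)) ξ‖ := by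
  have hprob : ∀ i, IsProbabilityMeasure (P.map (X i)) :=
    fun i ↦ Measure.isProbabilityMeasure_map (hX i)
  rw [(hindep.restrict _).charFun_map_fun_finsetSum_eq_prod fun i _ ↦ hX i, Finset.prod_apply,
    norm_prod]
  exact prod_le_prod_of_subset_of_le_one hst (fun _ _ ↦ norm_nonneg _)
    fun i _ _ ↦ norm_charFun_le_one ξ

theorem norm_charFun_map_sphAvg_le {d k m : ℕ} (hd : d ≠ 0) (hkm : k ≤ m) {X : Vertex d → Ω → ℝ}
    {ν : Measure ℝ} (hlaw : ∀ v, HasLaw (X v) ν P) (hindep : iIndepFun X P) (t : ℝ) :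
    ‖charFun (P.map (sphAvg d X (m + 1))) t‖ ≤
      ‖charFun ν ((#(sphereW d (k + 1)) : ℝ)⁻¹ * t)‖ ^ #(sphereW d (k + 1)) := by
  have hmeas : ∀ v, AEMeasurable (X v) P := fun v ↦ (hlaw v).aemeasurable
  rw [funext (sphAvg_succ_eq_sum_puncturedBall hd X m), ← prod_const]
  refine (norm_charFun_map_sum_le_prod (fun v ↦ (hmeas v).const_mul _)
    (hindep.comp (fun v x ↦ (#(sphereW d (vdepth v)) : ℝ)⁻¹ * x) fun v ↦ by fun_prop)
    (sphereW_subset_puncturedBall (Nat.lt_succ_of_le hkm)) t).trans_eq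
    (prod_congr rfl fun v hv ↦ ?_)
  rw [charFun_map_mul_comp (hmeas v), (hlaw v).map_eq, vdepth_of_mem_sphereW hv]

lemma tendsto_charFun_map_of_ae_tendsto {E : Type*} [NormedAddCommGroup E] [InnerProductSpace ℝ E]
    [FiniteDimensional ℝ E] [MeasurableSpace E] [BorelSpace E] {X : ℕ → Ω → E} {Z : Ω → E}
    (hX : ∀ n, AEMeasurable (X n) P) (hXZ : ∀ᵐ ω ∂P, Tendsto (fun n ↦ X n ω) atTop (𝓝 (Z ω)))
    (t : E) : Tendsto (fun n ↦ charFun (P.map (X n)) t) atTop (𝓝 (charFun (P.map Z) t)) :=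
  ProbabilityMeasure.tendsto_iff_tendsto_charFun.1 (tendstoInDistribution_of_ae_tendsto hX
    (aemeasurable_of_tendsto_metrizable_ae _ hX hXZ) hXZ).tendsto t

theorem exists_exp_decay_charFun_of_tendsto_sphAvg {d : ℕ} (hd : 1 < d) {X : Vertex d → Ω → ℝ}
    {ν : Measure ℝ} (hlaw : ∀ v, HasLaw (X v) ν P) (hν : ∀ c, ν ≠ Measure.dirac c)
    (hindep : iIndepFun X P) {H : Ω → ℝ}
    (hH : ∀ᵐ ω ∂P, Tendsto (fun r ↦ sphAvg d X r ω) atTop (𝓝 (H ω))) :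
    ∃ C c : ℝ, 0 < c ∧ ∀ t, ‖charFun (P.map H) t‖ ≤ C * Real.exp (-(c * ‖t‖)) := by
  have : IsProbabilityMeasure ν := ((hlaw (0, [])).isProbabilityMeasure_iff).1 inferInstance
  have hmeas : ∀ m, AEMeasurable (sphAvg d X (m + 1)) P :=
    fun m ↦ aemeasurable_sphAvg (fun v ↦ (hlaw v).aemeasurable) (m + 1)
  have hH' : ∀ᵐ ω ∂P, Tendsto (fun m ↦ sphAvg d X (m + 1) ω) atTop (𝓝 (H ω)) :=
    hH.mono fun _ ↦ (tendsto_add_atTop_iff_nat 1).2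
  have : IsProbabilityMeasure (P.map H) :=
    Measure.isProbabilityMeasure_map (aemeasurable_of_tendsto_metrizable_ae _ hmeas hH')
  obtain ⟨a, ha, hlt⟩ := exists_norm_charFun_lt_one hν
  refine exists_exp_decay_of_norm_le_norm_pow ha d.succ_pos hd continuous_charFun hlt
    norm_charFun_le_one fun k t ↦ ?_
  refine le_of_tendsto (tendsto_charFun_map_of_ae_tendsto hmeas hH' t).norm ?_
  filter_upwards [eventually_ge_atTop k] with m hkm
  simpa only [card_sphereW_succ] using norm_charFun_map_sphAvg_le (by omega) hkm hlaw hindep t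

theorem free_limit_smooth_density_general {d : ℕ} (hd : 2 ≤ d) {X : Vertex d → Ω → ℝ}
    {ν : Measure ℝ} (hlaw : ∀ v, HasLaw (X v) ν P) (hν : ∀ c, ν ≠ Measure.dirac c)
    (hindep : iIndepFun X P) {H : Ω → ℝ}
    (hH : ∀ᵐ ω ∂P, Tendsto (fun r ↦ sphAvg d X r ω) atTop (𝓝 (H ω))) :
    ∃ f : ℝ → ℝ,
      ContDiff ℝ (⊤ : ℕ∞) f ∧
      (∃ M : ℝ, ∀ x, |f x| ≤ M) ∧
      P.map H ≪ volume ∧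
      P.map H = volume.withDensity (fun x ↦ ENNReal.ofReal (f x)) ∧
      ∀ x : ℝ, (f x : ℂ) =
        (((2 * Real.pi)⁻¹ : ℝ) : ℂ) *
          ∫ t : ℝ, Complex.exp (-(Complex.I * t * x)) *
            ∫ ω, Complex.exp (Complex.I * t * (H ω : ℝ)) ∂P := by
  have hHmeas : AEMeasurable H P := aemeasurable_of_tendsto_metrizable_ae _
    (fun r ↦ aemeasurable_sphAvg (fun v ↦ (hlaw v).aemeasurable) r) hH
  obtain ⟨C, c, hc, hdecay⟩ := exists_exp_decay_charFun_of_tendsto_sphAvg hd hlaw hν hindep hH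
  have hmoment : ∀ n : ℕ, Integrable fun t ↦ ‖t‖ ^ n * ‖charFun (P.map H) t‖ :=
    integrable_pow_mul_norm_of_exp_decay (by fun_prop) hc hdecay
  have hint : Integrable (charFun (P.map H)) :=
    (integrable_norm_iff (by fun_prop)).1 (by simpa using hmoment 0)
  have hdensity := eq_withDensity_fourierDensity hint
  refine ⟨fourierDensity (P.map H), contDiff_fourierDensity fun n _ ↦ hmoment n,
    ⟨_, abs_fourierDensity_le _⟩, hdensity ▸ withDensity_absolutelyContinuous _ _, hdensity,
    fun x ↦ ?_⟩
  have hchar : ∀ t : ℝ,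
      charFun (P.map H) t = ∫ ω, Complex.exp (Complex.I * t * (H ω : ℝ)) ∂P := fun t ↦ by
    rw [charFun_apply_real, integral_map hHmeas (by fun_prop)]
    simp only [mul_comm, mul_left_comm]
  simp [ofReal_fourierDensity_eq_integral, hchar, mul_comm, mul_left_comm]

end SphericalAverages

lemma identDistrib_of_forall_measure_singleton_eq {Ω Ω' α : Type*} [MeasurableSpace Ω]
    [MeasurableSpace Ω'] [Countable α] [MeasurableSpace α] [MeasurableSingletonClass α]
    {P : Measure Ω} {P' : Measure Ω'} {X : Ω → α} {Y : Ω' → α} (hX : AEMeasurable X P)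
    (hY : AEMeasurable Y P') (h : ∀ a, P {ω | X ω = a} = P' {ω | Y ω = a}) :
    IdentDistrib X Y P P' where
  aemeasurable_fst := hX
  aemeasurable_snd := hY
  map_eq := by
    refine Measure.ext_of_singleton fun a ↦ ?_
    rw [Measure.map_apply_of_aemeasurable hX (measurableSet_singleton a),
      Measure.map_apply_of_aemeasurable hY (measurableSet_singleton a)]
    exact h a

lemma hasLaw_comp_of_forall_measure_singleton_eq {Ω Ω' α β : Type*} [MeasurableSpace Ω]
    [MeasurableSpace Ω'] [Countable α] [MeasurableSpace α] [MeasurableSingletonClass α]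
    [MeasurableSpace β] {P : Measure Ω} {P' : Measure Ω'} {X : Ω → α} {Y : Ω' → α}
    (hX : AEMeasurable X P) (hY : AEMeasurable Y P')
    (h : ∀ a, P {ω | X ω = a} = P' {ω | Y ω = a}) (g : α → β) :
    HasLaw (fun ω ↦ g (X ω)) (P'.map fun ω ↦ g (Y ω)) P :=
  have hXY := (identDistrib_of_forall_measure_singleton_eq hX hY h).comp (measurable_of_countable g)
  ⟨hXY.aemeasurable_fst, hXY.map_eq⟩

lemma ne_dirac_of_measure_singleton_ne_zero {α : Type*} [MeasurableSpace α]
    [MeasurableSingletonClass α] {μ : Measure α} {x y : α} (hxy : x ≠ y) (hx : μ {x} ≠ 0)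
    (hy : μ {y} ≠ 0) (c : α) : μ ≠ Measure.dirac c := by
  rintro rfl
  obtain rfl : c = x := by simpa [Measure.dirac_apply] using hx
  exact hxy (by simpa [Measure.dirac_apply] using hy)

lemma map_intCast_ne_dirac_of_symm {Ω : Type*} [MeasurableSpace Ω] {P : Measure Ω} {X : Ω → ℤ}
    (hX : AEMeasurable X P) {p : ℤ → ℝ} (hp : ∀ j : ℤ, P {ω | X ω = j} = ENNReal.ofReal (p j))
    (hsymm : ∀ j, p (-j) = p j) (hpos : 0 < ∑' j : ℤ, (j : ℝ) ^ 2 * p j) (c : ℝ) :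
    P.map (fun ω ↦ (X ω : ℝ)) ≠ Measure.dirac c := by
  obtain ⟨j, hj⟩ : ∃ j : ℤ, 0 < (j : ℝ) ^ 2 * p j := by
    by_contra! h
    exact hpos.not_ge (tsum_nonpos h)
  have hj0 : j ≠ 0 := by rintro rfl; simp at hj
  have hpj : 0 < p j := pos_of_mul_pos_right hj (sq_nonneg _)
  have hatom : ∀ i : ℤ, P.map (fun ω ↦ (X ω : ℝ)) {(i : ℝ)} = ENNReal.ofReal (p i) := fun i ↦ by
    rw [Measure.map_apply_of_aemeasurable (by fun_prop) (measurableSet_singleton _), ← hp]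
    simp [Set.preimage]
  have hne : (j : ℝ) ≠ (-j : ℤ) := mod_cast (by omega : j ≠ -j)
  refine ne_dirac_of_measure_singleton_ne_zero hne ?_ ?_ c
  · simpa only [hatom, ENNReal.ofReal_ne_zero_iff] using hpj
  · simpa only [hatom, hsymm, ENNReal.ofReal_ne_zero_iff] using hpj

/-- The law of the a.s. limit `H` of the spherical averages of the free
height field is absolutely continuous with a bounded `C^∞` Lebesgue density given by
Fourier inversion of the characteristic function of `H`. -/
theorem free_limit_smooth_density
    {Ω : Type} [MeasurableSpace Ω] (P : Measure Ω) [IsProbabilityMeasure P]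
    (d : ℕ) (hd : 2 ≤ d)
    (p : ℤ → ℝ) (hp0 : ∀ j, 0 ≤ p j) (hpsum : Summable p) (hp1 : ∑' j, p j = 1)
    (hsymm : ∀ j, p (-j) = p j)
    (hmom : Summable (fun j : ℤ => (j : ℝ) ^ 2 * p j))
    (hmompos : 0 < ∑' j : ℤ, (j : ℝ) ^ 2 * p j)
    (Y : Vertex d → Ω → ℤ) (hmeas : ∀ v, Measurable (Y v))
    (hindep : iIndepFun Y P)
    (hlaw : ∀ v (j : ℤ), P {ω | Y v ω = j} = ENNReal.ofReal (p j))
    (H : Ω → ℝ) (hHmeas : Measurable H)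
    (hH : ∀ᵐ ω ∂P, Tendsto (fun r => sphAvg d (fun v ω => (Y v ω : ℝ)) r ω) atTop (𝓝 (H ω))) :
    ∃ f : ℝ → ℝ,
      ContDiff ℝ (⊤ : ℕ∞) f ∧
      (∃ M : ℝ, ∀ x, |f x| ≤ M) ∧
      (Measure.map H P) ≪ (volume : Measure ℝ) ∧
      (Measure.map H P) = volume.withDensity (fun x => ENNReal.ofReal (f x)) ∧
      ∀ x : ℝ, (f x : ℂ) =
        (((2 * Real.pi)⁻¹ : ℝ) : ℂ) *
          ∫ t : ℝ, Complex.exp (-(Complex.I * t * x)) *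
            ∫ ω, Complex.exp (Complex.I * t * (H ω : ℝ)) ∂P := by
  exact free_limit_smooth_density_general hd
    (fun v ↦ hasLaw_comp_of_forall_measure_singleton_eq (hmeas v).aemeasurable
      (hmeas (0, [])).aemeasurable (fun j ↦ (hlaw v j).trans (hlaw _ j).symm) _)
    (map_intCast_ne_dirac_of_symm (hmeas _).aemeasurable (hlaw _) hsymm hmompos)
    (hindep.comp (fun _ j ↦ (j : ℝ)) fun _ ↦ by fun_prop) hH
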